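/- arXiv:1612.06771 — 7 statements merged into one kernel-verified Lean document; each statement's English description precedes it below -/
import Mathlib

section
/- Let X be an ∞-pseudo-metric space and r > 0. If ℳ is an r-orthogonal subspace S×T-matrix of X and 𝒜 is an r-orthogonal subspace T×R-matrix of X, then the matrix ∩-product ℳ ·∩ 𝒜 is an r-orthogonal S×R-matrix. -/
open Set

/-- `C` and `D` are scale-`r`-disjoint: their open `r`-neighborhoods are disjoint. -/
def ScaleDisjoint {X : Type*} [PseudoEMetricSpace X] (r : ℝ) (C D : Set X) : Prop :=
  Metric.thickening r C ∩ Metric.thickening r D = ∅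

/-- A subspace matrix is `r`-orthogonal if each of its columns is scale-`r`-disjoint. -/
def ROrthogonal {X S T : Type*} [PseudoEMetricSpace X] (r : ℝ) (M : S → T → Set X) : Prop :=
  ∀ t : T, ∀ s s' : S, s ≠ s' → ScaleDisjoint r (M s t) (M s' t)

/-- Let `X` be an `∞`-pseudo-metric space and `r > 0`. If `M` is an `r`-orthogonal subspace
`S×T`-matrix of `X` and `A` is an `r`-orthogonal subspace `T×R`-matrix of `X`, then the matrix
`∩`-product `M ·∩ A`, whose `(s, q)` entry is `⋃ t, M s t ∩ A t q`, is an `r`-orthogonal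
`S×R`-matrix. -/
theorem matInterProd_rOrthogonal {X S T R : Type*} [PseudoEMetricSpace X] (r : ℝ) (hr : 0 < r)
    (M : S → T → Set X) (A : T → R → Set X)
    (hM : ROrthogonal r M) (hA : ROrthogonal r A) :
    ROrthogonal r (fun s q => ⋃ t : T, M s t ∩ A t q) := by
  intro q s s' hs
  refine eq_empty_of_forall_notMem fun x hx => ?_
  simp only [Metric.thickening_iUnion, mem_inter_iff, mem_iUnion] at hx
  obtain ⟨⟨t, ht⟩, t', ht'⟩ := hx
  by_cases h : t = t'
  · subst h
    exact (hM t s s' hs).subset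
      ⟨Metric.thickening_subset_of_subset r inter_subset_left ht,
        Metric.thickening_subset_of_subset r inter_subset_left ht'⟩
  · exact (hA q t t' h).subset
      ⟨Metric.thickening_subset_of_subset r inter_subset_right ht,
        Metric.thickening_subset_of_subset r inter_subset_right ht'⟩
end

section
/- Let X be an ∞-pseudo-metric space and r > 0. If each column of a subspace S×T-matrix ℳ of X is scale-r-disjoint and 𝒜 is a scale-r-disjoint subspace array of X indexed by T, then the array ℳ ·∩ 𝒜ᵀ, whose s-th entry is ⋃_{t∈T} ℳ(s,t) ∩ 𝒜(t), is scale-r-disjoint. -/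
open Set

/-- Let `X` be an `∞`-pseudo-metric space and `r > 0`. If each column of a subspace
`S×T`-matrix `M` of `X` is scale-`r`-disjoint and `A` is a scale-`r`-disjoint subspace array of
`X` indexed by `T`, then the array `M ·∩ Aᵀ`, whose `s`-th entry is `⋃ t, M s t ∩ A t`, is
scale-`r`-disjoint. -/
theorem matInterProd_array_scaleDisjoint {X S T : Type*} [PseudoEMetricSpace X] (r : ℝ)
    (hr : 0 < r) (M : S → T → Set X) (A : T → Set X)
    (hM : ∀ t : T, ∀ s s' : S, s ≠ s' → ScaleDisjoint r (M s t) (M s' t))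
    (hA : ∀ t t' : T, t ≠ t' → ScaleDisjoint r (A t) (A t')) :
    ∀ s s' : S, s ≠ s' →
      ScaleDisjoint r (⋃ t : T, M s t ∩ A t) (⋃ t : T, M s' t ∩ A t) := by
  intro s s' hs
  refine eq_empty_of_forall_notMem fun x hx => ?_
  rw [Metric.thickening_iUnion, Metric.thickening_iUnion] at hx
  obtain ⟨h, h'⟩ := hx
  obtain ⟨t, ht⟩ := mem_iUnion.1 h
  obtain ⟨t', ht'⟩ := mem_iUnion.1 h'
  by_cases htt : t = t'
  · subst htt
    exact (hM t s s' hs).subset ⟨Metric.thickening_subset_of_subset r inter_subset_left ht,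
      Metric.thickening_subset_of_subset r inter_subset_left ht'⟩
  · exact (hA t t' htt).subset ⟨Metric.thickening_subset_of_subset r inter_subset_right ht,
      Metric.thickening_subset_of_subset r inter_subset_right ht'⟩
end

section
/- Let X and Y be ∞-pseudo-metric spaces and r > 0. If X is of scale-r-dimension 0 and Y is of scale-r-dimension 0, then X × Y with the supremum ∞-pseudo-metric is of scale-r-dimension 0. -/
open Set
open scoped ENNReal

/-- `y` is joined to `x` by a scale-`r`-chain in `A`: a finite sequence of points of `A`
starting at `x` and ending at `y`, consecutive points of which have intersecting open
`r`-balls. -/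
def ScaleChain {X : Type*} [PseudoEMetricSpace X] (r : ℝ) (A : Set X) (x y : X) : Prop :=
  ∃ n : ℕ, ∃ c : ℕ → X, (∀ i ≤ n, c i ∈ A) ∧ c 0 = x ∧ c n = y ∧
    ∀ i < n,
      (EMetric.ball (c i) (ENNReal.ofReal r) ∩
        EMetric.ball (c (i + 1)) (ENNReal.ofReal r)).Nonempty

/-- The scale-`r`-component of `x` in `A`: all points of `A` joined to `x` by a
scale-`r`-chain in `A`. -/
def ScaleComponent {X : Type*} [PseudoEMetricSpace X] (r : ℝ) (A : Set X) (x : X) : Set X :=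
  {y | ScaleChain r A x y}

/-- `A` has scale-`r`-dimension `0`: there is a finite bound on the diameters of all
scale-`r`-components of `A`. -/
def ScaleDimZero {X : Type*} [PseudoEMetricSpace X] (r : ℝ) (A : Set X) : Prop :=
  ∃ M : ℝ≥0∞, M ≠ ⊤ ∧ ∀ x ∈ A, EMetric.diam (ScaleComponent r A x) ≤ M

/-- A map that does not increase distances sends scale-`r`-chains to scale-`r`-chains. -/
theorem ScaleChain.map {X Y : Type*} [PseudoEMetricSpace X] [PseudoEMetricSpace Y] {r : ℝ}
    {A : Set X} {B : Set Y} {x y : X} {f : X → Y} (h : ScaleChain r A x y)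
    (hf : LipschitzWith 1 f) (hAB : MapsTo f A B) : ScaleChain r B (f x) (f y) := by
  obtain ⟨n, c, hc, rfl, rfl, hn⟩ := h
  refine ⟨n, f ∘ c, fun i hi => hAB (hc i hi), rfl, rfl, fun i hi => ?_⟩
  obtain ⟨z, hz, hz'⟩ := hn i hi
  have hle (w : X) : edist (f z) (f w) ≤ edist z w := by simpa using hf z w
  exact ⟨f z, (hle _).trans_lt hz, (hle _).trans_lt hz'⟩

/-- Let `X` and `Y` be `∞`-pseudo-metric spaces and `r > 0`. If `X` is of
scale-`r`-dimension `0` and `Y` is of scale-`r`-dimension `0`, then `X × Y` with the supremum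
`∞`-pseudo-metric is of scale-`r`-dimension `0`. -/
theorem scaleDimZero_prod {X Y : Type*} [PseudoEMetricSpace X] [PseudoEMetricSpace Y]
    (r : ℝ) (hr : 0 < r) (hX : ScaleDimZero r (univ : Set X))
    (hY : ScaleDimZero r (univ : Set Y)) :
    ScaleDimZero r (univ : Set (X × Y)) := by
  obtain ⟨M, hM, hXM⟩ := hX
  obtain ⟨N, hN, hYN⟩ := hY
  refine ⟨max M N, (max_lt hM.lt_top hN.lt_top).ne, fun x _ => Metric.ediam_le fun p hp q hq => ?_⟩
  have hfst {z : X × Y} (h : ScaleChain r univ x z) : z.1 ∈ ScaleComponent r univ x.1 :=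
    h.map LipschitzWith.prod_fst (mapsTo_univ _ univ)
  have hsnd {z : X × Y} (h : ScaleChain r univ x z) : z.2 ∈ ScaleComponent r univ x.2 :=
    h.map LipschitzWith.prod_snd (mapsTo_univ _ univ)
  exact max_le_max
    ((Metric.edist_le_ediam_of_mem (hfst hp) (hfst hq)).trans (hXM x.1 (mem_univ _)))
    ((Metric.edist_le_ediam_of_mem (hsnd hp) (hsnd hq)).trans (hYN x.2 (mem_univ _)))
end

section
/- Let X and Y be ∞-pseudo-metric spaces and r > 0. Suppose 𝒜 is a subspace array in X indexed by S that is scale-r-disjoint and of scale-r-dimension 0 (there is a single finite M bounding the diameters of all scale-r-components of all entries 𝒜(s)), and ℬ is a subspace array in Y indexed by S of scale-r-dimension 0 (a single finite bound for all entries). Then the subset 𝒜 ·× ℬ = ⋃_{s∈S} 𝒜(s) × ℬ(s) of X × Y with the supremum ∞-pseudo-metric is of scale-r-dimension 0. -/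
open Set
open scoped ENNReal

theorem ScaleChain.image {X Y : Type*} [PseudoEMetricSpace X] [PseudoEMetricSpace Y] {r : ℝ}
    {A : Set X} {B : Set Y} {x y : X} {f : X → Y} (hf : LipschitzWith 1 f) (hAB : MapsTo f A B)
    (h : ScaleChain r A x y) : ScaleChain r B (f x) (f y) := by
  obtain ⟨n, c, hc, rfl, rfl, hstep⟩ := h
  refine ⟨n, f ∘ c, fun i hi => hAB (hc i hi), rfl, rfl, fun i hi => ?_⟩
  obtain ⟨z, hz, hz'⟩ := hstep i hi
  have hle (a : X) : edist (f z) (f a) ≤ edist z a := by simpa using hf z a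
  exact ⟨f z, (hle _).trans_lt hz, (hle _).trans_lt hz'⟩

/-- A scale-chain in the `×`-dot product that starts in the block `A s ×ˢ B s` is a scale-chain
of that block, when `A` is scale-disjoint. -/
theorem ScaleChain.of_iUnion_prod {X Y S : Type*} [PseudoEMetricSpace X] [PseudoEMetricSpace Y]
    {r : ℝ} {A : S → Set X} {B : S → Set Y}
    (hdisj : ∀ s s' : S, s ≠ s' →
      Metric.thickening r (A s) ∩ Metric.thickening r (A s') = ∅)
    {s : S} {p q : X × Y} (hp : p ∈ A s ×ˢ B s) (h : ScaleChain r (⋃ s : S, A s ×ˢ B s) p q) :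
    ScaleChain r (A s ×ˢ B s) p q := by
  obtain ⟨n, c, hc, rfl, rfl, hstep⟩ := h
  refine ⟨n, c, fun i => ?_, rfl, rfl, hstep⟩
  induction i with
  | zero => exact fun _ => hp
  | succ i ih =>
    intro hi
    obtain ⟨t, ht⟩ := mem_iUnion.1 (hc (i + 1) hi)
    obtain rfl | hst := eq_or_ne s t
    · exact ht
    obtain ⟨z, hz, hz'⟩ := hstep i hi
    have hmem {a : X × Y} {u : S} (ha : a ∈ A u ×ˢ B u) (hza : edist z a < ENNReal.ofReal r) :
        z.1 ∈ Metric.thickening r (A u) :=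
      (Metric.mem_thickening_iff_exists_edist_lt _ _).2
        ⟨a.1, ha.1, (le_max_left _ _).trans_lt hza⟩
    exact absurd (hdisj s t hst)
      (Set.Nonempty.ne_empty ⟨z.1, hmem (ih (by lia)) hz, hmem ht hz'⟩)

/-- Let `X` and `Y` be `∞`-pseudo-metric spaces and `r > 0`. Suppose `A` is a subspace array
in `X` indexed by `S` that is scale-`r`-disjoint and of scale-`r`-dimension `0` (a single
finite `M` bounds the diameters of all scale-`r`-components of all the entries `A s`), and
`B` is a subspace array in `Y` indexed by `S` of scale-`r`-dimension `0` (again with a single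
finite bound for all entries). Then the subset `A ·× B = ⋃ s, A s ×ˢ B s` of `X × Y` with the
supremum `∞`-pseudo-metric is of scale-`r`-dimension `0`. -/
theorem scaleDimZero_timesDotProd {X Y S : Type*} [PseudoEMetricSpace X] [PseudoEMetricSpace Y]
    (r : ℝ) (hr : 0 < r) (A : S → Set X) (B : S → Set Y)
    (hdisj : ∀ s s' : S, s ≠ s' →
      Metric.thickening r (A s) ∩ Metric.thickening r (A s') = ∅)
    (hA : ∃ M : ℝ≥0∞, M ≠ ⊤ ∧ ∀ s : S, ∀ x ∈ A s, EMetric.diam (ScaleComponent r (A s) x) ≤ M)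
    (hB : ∃ N : ℝ≥0∞, N ≠ ⊤ ∧ ∀ s : S, ∀ y ∈ B s, EMetric.diam (ScaleComponent r (B s) y) ≤ N) :
    ScaleDimZero r (⋃ s : S, A s ×ˢ B s) := by
  obtain ⟨M, hM, hA⟩ := hA
  obtain ⟨N, hN, hB⟩ := hB
  refine ⟨max M N, (max_lt hM.lt_top hN.lt_top).ne, fun p hp => ?_⟩
  obtain ⟨s, hs⟩ := mem_iUnion.1 hp
  refine Metric.ediam_le fun q hq q' hq' => ?_
  have hfst {q : X × Y} (hq : ScaleChain r (⋃ s : S, A s ×ˢ B s) p q) :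
      q.1 ∈ ScaleComponent r (A s) p.1 :=
    (ScaleChain.of_iUnion_prod hdisj hs hq).image LipschitzWith.prod_fst fun _ h => h.1
  have hsnd {q : X × Y} (hq : ScaleChain r (⋃ s : S, A s ×ˢ B s) p q) :
      q.2 ∈ ScaleComponent r (B s) p.2 :=
    (ScaleChain.of_iUnion_prod hdisj hs hq).image LipschitzWith.prod_snd fun _ h => h.2
  exact max_le_max
    ((Metric.edist_le_ediam_of_mem (hfst hq) (hfst hq')).trans (hA s _ hs.1))
    ((Metric.edist_le_ediam_of_mem (hsnd hq) (hsnd hq')).trans (hB s _ hs.2))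
end

section
/- Let X be an ∞-pseudo-metric space and n ≥ 0 an integer. The asymptotic dimension of X is at most n if and only if for every real r > 0 and every integer m ≥ 1 there is a family of subsets M(i,j) of X, indexed by 1 ≤ i ≤ m and 0 ≤ j ≤ n, such that: every M(i,j) is of scale-r-dimension 0; for every i, ⋃_{j=0}^{n} M(i,j) = X (each row covers X); and for all i ≠ i' and every 1 ≤ j ≤ n, the sets M(i,j) and M(i',j) are scale-r-disjoint (each column, except the 0-th, is scale-r-disjoint). -/
open Set
open scoped ENNReal

/-- Scale-`r`-dimension `0` means that endpoints of scale-`r`-chains are uniformly close. -/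
theorem scaleDimZero_iff_edist_le {X : Type*} [PseudoEMetricSpace X] {r : ℝ} {A : Set X} :
    ScaleDimZero r A ↔ ∃ M : ℝ≥0∞, M ≠ ⊤ ∧ ∀ x y, ScaleChain r A x y → edist x y ≤ M := by
  constructor
  · rintro ⟨M, hM, h⟩
    refine ⟨M, hM, fun x y hxy => ?_⟩
    obtain ⟨k, c, hc, rfl, -, -⟩ := id hxy
    have hx : c 0 ∈ A := hc 0 (Nat.zero_le k)
    have hself : c 0 ∈ ScaleComponent r A (c 0) :=
      ⟨0, fun _ => c 0, fun _ _ => hx, rfl, rfl, fun i hi => absurd hi (Nat.not_lt_zero i)⟩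
    exact (Metric.edist_le_ediam_of_mem hself hxy).trans (h _ hx)
  · rintro ⟨M, hM, h⟩
    refine ⟨M + M, ENNReal.add_ne_top.2 ⟨hM, hM⟩, fun x _ => Metric.ediam_le fun y hy z hz => ?_⟩
    exact (edist_triangle_left y z x).trans (add_le_add (h x y hy) (h x z hz))

theorem ScaleDimZero.mono {X : Type*} [PseudoEMetricSpace X] {r s : ℝ} {A B : Set X}
    (hB : ScaleDimZero s B) (hAB : A ⊆ B) (hrs : r ≤ s) : ScaleDimZero r A := by
  rw [scaleDimZero_iff_edist_le] at hB ⊢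
  obtain ⟨M, hM, h⟩ := hB
  refine ⟨M, hM, fun x y ⟨k, c, hc, h0, hk, hball⟩ => h x y
    ⟨k, c, fun i hi => hAB (hc i hi), h0, hk, fun i hi => (hball i hi).mono ?_⟩⟩
  exact inter_subset_inter (Metric.eball_subset_eball (ENNReal.ofReal_le_ofReal hrs))
    (Metric.eball_subset_eball (ENNReal.ofReal_le_ofReal hrs))

theorem ScaleDimZero.thickening {X : Type*} [PseudoEMetricSpace X] {r δ : ℝ} {A : Set X}
    (hr : 0 ≤ r) (hδ : 0 ≤ δ) (hA : ScaleDimZero (r + δ) A) :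
    ScaleDimZero r (Metric.thickening δ A) := by
  rw [scaleDimZero_iff_edist_le] at hA ⊢
  obtain ⟨M, hM, h⟩ := hA
  refine ⟨ENNReal.ofReal δ + M + ENNReal.ofReal δ, by simp [hM], ?_⟩
  rintro x y ⟨k, c, hc, rfl, rfl, hball⟩
  have hex : ∀ i, ∃ p, i ≤ k → p ∈ A ∧ edist (c i) p < ENNReal.ofReal δ := by
    intro i
    by_cases hi : i ≤ k
    · obtain ⟨p, hp⟩ := (Metric.mem_thickening_iff_exists_edist_lt _ _).1 (hc i hi)
      exact ⟨p, fun _ => hp⟩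
    · exact ⟨c i, fun hi' => absurd hi' hi⟩
  choose p hp using hex
  have hsub : ∀ i ≤ k, Metric.eball (c i) (ENNReal.ofReal r) ⊆
      Metric.eball (p i) (ENNReal.ofReal (r + δ)) := by
    intro i hi z hz
    rw [Metric.mem_eball] at hz ⊢
    rw [ENNReal.ofReal_add hr hδ]
    exact (edist_triangle z (c i) (p i)).trans_lt (ENNReal.add_lt_add hz (hp i hi).2)
  have hchain : ScaleChain (r + δ) A (p 0) (p k) :=
    ⟨k, p, fun i hi => (hp i hi).1, rfl, rfl, fun i hi =>
      (hball i hi).mono (inter_subset_inter (hsub i hi.le) (hsub (i + 1) hi))⟩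
  refine (edist_triangle4 _ (p 0) (p k) _).trans ?_
  gcongr
  · exact (hp 0 (Nat.zero_le k)).2.le
  · exact h _ _ hchain
  · rw [edist_comm]
    exact (hp k le_rfl).2.le

theorem ScaleDisjoint.symm {X : Type*} [PseudoEMetricSpace X] {r : ℝ} {C D : Set X}
    (h : ScaleDisjoint r C D) : ScaleDisjoint r D C := by
  rw [ScaleDisjoint, inter_comm]
  exact h

theorem ScaleDisjoint.mono {X : Type*} [PseudoEMetricSpace X] {r : ℝ} {C D C' D' : Set X}
    (h : ScaleDisjoint r C D) (hC : C' ⊆ C) (hD : D' ⊆ D) : ScaleDisjoint r C' D' :=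
  subset_eq_empty (inter_subset_inter (Metric.thickening_subset_of_subset r hC)
    (Metric.thickening_subset_of_subset r hD)) h

/-- A chain in a union of two scale-disjoint sets stays in the set in which it starts. -/
theorem ScaleChain.of_union {X : Type*} [PseudoEMetricSpace X] {r : ℝ} {A B : Set X}
    (hAB : ScaleDisjoint r A B) {x y : X} (h : ScaleChain r (A ∪ B) x y) (hx : x ∈ A) :
    ScaleChain r A x y := by
  obtain ⟨k, c, hc, rfl, rfl, hball⟩ := h
  refine ⟨k, c, fun i => ?_, rfl, rfl, hball⟩
  induction i with
  | zero => exact fun _ => hx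
  | succ i ih =>
    intro hi
    refine (hc _ hi).resolve_right fun hB => ?_
    obtain ⟨z, hz, hz'⟩ := hball i hi
    exact (eq_empty_iff_forall_notMem.1 hAB) z
      ⟨(Metric.mem_thickening_iff_exists_edist_lt _ _).2 ⟨_, ih (by omega), hz⟩,
        (Metric.mem_thickening_iff_exists_edist_lt _ _).2 ⟨_, hB, hz'⟩⟩

theorem ScaleDimZero.union {X : Type*} [PseudoEMetricSpace X] {r : ℝ} {A B : Set X}
    (hA : ScaleDimZero r A) (hB : ScaleDimZero r B) (hAB : ScaleDisjoint r A B) :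
    ScaleDimZero r (A ∪ B) := by
  rw [scaleDimZero_iff_edist_le] at hA hB ⊢
  obtain ⟨M, hM, hA⟩ := hA
  obtain ⟨N, hN, hB⟩ := hB
  refine ⟨max M N, (max_lt hM.lt_top hN.lt_top).ne, fun x y hxy => ?_⟩
  have hx : x ∈ A ∪ B := by
    obtain ⟨k, c, hc, rfl, -, -⟩ := hxy
    exact hc 0 (Nat.zero_le k)
  rcases hx with hx | hx
  · exact (hA x y (hxy.of_union hAB hx)).trans (le_max_left _ _)
  · rw [union_comm] at hxy
    exact (hB x y (hxy.of_union hAB.symm hx)).trans (le_max_right _ _)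

/-- Sets separated by a shell of width `2 * r` around `A` are scale-`r`-disjoint. -/
theorem scaleDisjoint_of_subset_thickening {X : Type*} [PseudoEMetricSpace X] {r a b : ℝ}
    {A C D : Set X} (hab : a + 2 * r ≤ b)
    (hC : C ⊆ Metric.thickening a A) (hD : Disjoint D (Metric.thickening b A)) :
    ScaleDisjoint r C D := by
  refine eq_empty_iff_forall_notMem.2 fun z ⟨hzC, hzD⟩ => ?_
  obtain ⟨d, hd, hzd⟩ := (Metric.mem_thickening_iff_exists_edist_lt _ _).1 hzD
  refine disjoint_left.1 hD hd (Metric.thickening_mono (by linarith : r + (r + a) ≤ b) A ?_)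
  refine Metric.thickening_thickening_subset r (r + a) A
    ((Metric.mem_thickening_iff_exists_edist_lt _ _).2 ⟨z, ?_, by rwa [edist_comm]⟩)
  exact Metric.thickening_thickening_subset r a A (Metric.thickening_subset_of_subset r hC hzC)

/-- A cover by `n + 1` sets of dimension `0` at a sufficiently large scale can be rearranged into
`m` covers by `n + 1` sets of scale-`r`-dimension `0` which, except for the `0`-th members, are
pairwise scale-`r`-disjoint. -/
theorem exists_matrix_of_scaleDimZero {X : Type*} [PseudoEMetricSpace X] (n m : ℕ) {r : ℝ}
    (hr : 0 < r) :
    ∃ R : ℝ, r ≤ R ∧ ∀ F : Fin (n + 1) → Set X, (∀ j, ScaleDimZero R (F j)) →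
      ∃ M : Fin m → Fin (n + 1) → Set X,
        (∀ i j, ScaleDimZero r (M i j)) ∧
        (∀ i, (⋃ j, F j) ⊆ ⋃ j, M i j) ∧
        (∀ i i' : Fin m, i ≠ i' → ∀ j : Fin (n + 1), j ≠ 0 →
          ScaleDisjoint r (M i j) (M i' j)) := by
  induction n with
  | zero =>
    exact ⟨r, le_rfl, fun F hF => ⟨fun _ => F, fun _ => hF, fun _ => Subset.rfl,
      fun _ _ _ j hj => absurd (Fin.fin_one_eq_zero j) hj⟩⟩
  | succ n ih =>
    obtain ⟨R, hrR, ih⟩ := ih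
    have hρ : 0 ≤ 4 * r * (m + 1) := by positivity
    refine ⟨R + 4 * r * (m + 1), by linarith, fun F hF => ?_⟩
    obtain ⟨M, hM, hcov, hdisj⟩ := ih
      (fun j => Metric.thickening (4 * r * (m + 1)) (F j.castSucc))
      fun j => (hF j.castSucc).thickening (by linarith) hρ
    set A : Set X := ⋃ j : Fin (n + 1), F j.castSucc
    set B : Set X := F (Fin.last (n + 1))
    -- the `i`-th shell consists of the points at distance between `a i` and `a i + 2 * r` from `A`
    let a : Fin m → ℝ := fun i => 4 * r * ((i : ℝ) + 1)
    have ha : ∀ i, 0 < a i := fun i => by positivity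
    have haρ : ∀ i, a i ≤ 4 * r * (m + 1) := fun i => by
      have : (i : ℝ) ≤ m := by exact_mod_cast i.2.le
      simp only [a]
      gcongr
    have hagap : ∀ i i', i < i' → a i + 4 * r ≤ a i' := fun i i' h => by
      have : ((i : ℕ) : ℝ) + 1 ≤ i' := by exact_mod_cast h
      simp only [a]
      nlinarith
    let inner : Fin m → Set X := fun i => Metric.thickening (a i) A
    let outer : Fin m → Set X := fun i => B \ Metric.thickening (a i + 2 * r) A
    let shell : Fin m → Set X :=
      fun i => (B ∩ Metric.thickening (a i + 2 * r) A) \ Metric.thickening (a i) A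
    have hBdim : ScaleDimZero r B := (hF _).mono Subset.rfl (by linarith)
    have hshell : ∀ i i', i < i' → ScaleDisjoint r (shell i) (shell i') := fun i i' h =>
      scaleDisjoint_of_subset_thickening (by linarith [hagap i i' h])
        (fun x hx => hx.1.2) disjoint_sdiff_left
    refine ⟨fun i => Fin.snoc (α := fun _ => Set X)
      (fun j => if j = 0 then (M i 0 ∩ inner i) ∪ outer i else M i j ∩ inner i) (shell i),
      fun i j => ?_, fun i x hx => ?_, fun i i' hii' j => ?_⟩
    · induction j using Fin.lastCases with
      | last =>
        simp only [Fin.snoc_last]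
        exact hBdim.mono (fun x hx => hx.1.1) le_rfl
      | cast j =>
        simp only [Fin.snoc_castSucc]
        split_ifs
        · exact ((hM i 0).mono inter_subset_left le_rfl).union
            (hBdim.mono sdiff_subset le_rfl)
            (scaleDisjoint_of_subset_thickening le_rfl inter_subset_right disjoint_sdiff_left)
        · exact (hM i j).mono inter_subset_left le_rfl
    · by_cases hxi : x ∈ inner i
      · have hx' : x ∈ ⋃ j : Fin (n + 1),
            Metric.thickening (4 * r * (m + 1)) (F j.castSucc) := by
          rw [← Metric.thickening_iUnion]
          exact Metric.thickening_mono (haρ i) A hxi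
        obtain ⟨j, hj⟩ := mem_iUnion.1 (hcov i hx')
        refine mem_iUnion.2 ⟨j.castSucc, ?_⟩
        simp only [Fin.snoc_castSucc]
        split_ifs with h0
        · exact Or.inl ⟨h0 ▸ hj, hxi⟩
        · exact ⟨hj, hxi⟩
      · have hxB : x ∈ B := by
          obtain ⟨j, hj⟩ := mem_iUnion.1 hx
          induction j using Fin.lastCases with
          | last => exact hj
          | cast j =>
            exact absurd (Metric.self_subset_thickening (ha i) A (mem_iUnion.2 ⟨j, hj⟩)) hxi
        by_cases hxo : x ∈ Metric.thickening (a i + 2 * r) A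
        · refine mem_iUnion.2 ⟨Fin.last _, ?_⟩
          simp only [Fin.snoc_last]
          exact ⟨⟨hxB, hxo⟩, hxi⟩
        · refine mem_iUnion.2 ⟨Fin.castSucc 0, ?_⟩
          simp only [Fin.snoc_castSucc, if_pos]
          exact Or.inr ⟨hxB, hxo⟩
    · induction j using Fin.lastCases with
      | last =>
        intro _
        simp only [Fin.snoc_last]
        exact hii'.lt_or_gt.elim (hshell i i') fun h => (hshell i' i h).symm
      | cast j =>
        intro hj
        have hj0 : j ≠ 0 := fun h => hj (by rw [h, Fin.castSucc_zero])
        simp only [Fin.snoc_castSucc, if_neg hj0]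
        exact (hdisj i i' hii' j hj0).mono inter_subset_left inter_subset_left

/-- Let `X` be an `∞`-pseudo-metric space and `n ≥ 0` an integer. The asymptotic dimension of
`X` is at most `n` (for every `r > 0`, `X` decomposes into `n + 1` subsets of
scale-`r`-dimension `0`) if and only if for every real `r > 0` and every integer `m ≥ 1` there
is a family of subsets `M i j` of `X`, `i : Fin m`, `j : Fin (n+1)`, such that every `M i j`
is of scale-`r`-dimension `0`, each row covers `X`, and each column except the `0`-th one is
scale-`r`-disjoint. -/
theorem asdim_le_iff_matrix {X : Type*} [PseudoEMetricSpace X] (n : ℕ) :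
    (∀ r : ℝ, 0 < r → ∃ F : Fin (n + 1) → Set X,
        (⋃ i, F i) = univ ∧ ∀ i, ScaleDimZero r (F i)) ↔
    (∀ r : ℝ, 0 < r → ∀ m : ℕ, 1 ≤ m →
      ∃ M : Fin m → Fin (n + 1) → Set X,
        (∀ i j, ScaleDimZero r (M i j)) ∧
        (∀ i, (⋃ j, M i j) = univ) ∧
        (∀ i i' : Fin m, i ≠ i' → ∀ j : Fin (n + 1), j ≠ 0 →
          ScaleDisjoint r (M i j) (M i' j))) := by
  constructor
  · intro h r hr m _
    obtain ⟨R, hrR, hR⟩ := exists_matrix_of_scaleDimZero (X := X) n m hr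
    obtain ⟨F, hF, hdim⟩ := h R (hr.trans_le hrR)
    obtain ⟨M, hM, hcov, hdisj⟩ := hR F hdim
    exact ⟨M, hM, fun i => univ_subset_iff.1 (hF ▸ hcov i), hdisj⟩
  · intro h r hr
    obtain ⟨M, hM, hcov, -⟩ := h r hr 1 le_rfl
    exact ⟨M 0, hcov 0, hM 0⟩
end

section
/- Let X and Y be subspaces of an ∞-pseudo-metric space Z. If (1,α) is an APD profile of X and (1,β) is an APD profile of Y, then (2, max(α,β)) is an APD profile of X ∪ Y; that is, for all reals 0 < r ≤ s there is a decomposition X ∪ Y = W_0 ∪ W_1 such that W_0 is the union of at most 2 subsets of scale-r-dimension 0 and W_1 is the union of at most ⌊max(α(r),β(r))⌋ subsets of scale-s-dimension 0. -/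
open Set
open scoped ENNReal

/-- `A` is the union of at most `n` subsets of scale-`s`-dimension `0`. -/
def UnionAtMost {X : Type*} [PseudoEMetricSpace X] (n : ℕ) (s : ℝ) (A : Set X) : Prop :=
  ∃ G : Fin n → Set X, A = ⋃ j, G j ∧ ∀ j, ScaleDimZero s (G j)

/-- `(1, α)` is an APD profile of the subspace `A` of `Z`: for all reals `0 < r ≤ s` there is
a decomposition `A = A₀ ∪ A₁` with `A₀` of scale-`r`-dimension `0` and `A₁` the union of at
most `⌊α r⌋` subsets of scale-`s`-dimension `0`. -/
def APDPairOn {Z : Type*} [PseudoEMetricSpace Z] (A : Set Z) (α : ℝ → ℝ) : Prop :=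
  ∀ r s : ℝ, 0 < r → r ≤ s →
    ∃ A₀ A₁ : Set Z, A₀ ∪ A₁ = A ∧ ScaleDimZero r A₀ ∧ UnionAtMost (Nat.floor (α r)) s A₁

section

variable {Z : Type*} [PseudoEMetricSpace Z]

/-- The open `r`-balls around `x` and `y` intersect. -/
def BallsMeet (r : ℝ) (x y : Z) : Prop :=
  (EMetric.ball x (ENNReal.ofReal r) ∩ EMetric.ball y (ENNReal.ofReal r)).Nonempty

/-- All scale-`r`-components of `A` have diameter at most `M`. -/
def ScaleBounded (r : ℝ) (A : Set Z) (M : ℝ≥0∞) : Prop :=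
  ∀ x ∈ A, EMetric.diam (ScaleComponent r A x) ≤ M

namespace BallsMeet

variable {r s : ℝ} {x y : Z}

theorem mono (hrs : r ≤ s) (h : BallsMeet r x y) : BallsMeet s x y := by
  obtain ⟨z, hzx, hzy⟩ := h
  have hle := ENNReal.ofReal_le_ofReal hrs
  exact ⟨z, lt_of_lt_of_le hzx hle, lt_of_lt_of_le hzy hle⟩

theorem edist_le (h : BallsMeet r x y) : edist x y ≤ ENNReal.ofReal r + ENNReal.ofReal r := by
  obtain ⟨z, hzx, hzy⟩ := h
  have hxz : edist x z ≤ ENNReal.ofReal r := by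
    rw [edist_comm]
    exact le_of_lt hzx
  exact (edist_triangle x z y).trans (add_le_add hxz (le_of_lt hzy))

theorem of_edist_lt (h : edist x y < ENNReal.ofReal r) : BallsMeet r x y := by
  refine ⟨x, ?_, h⟩
  change edist x x < _
  rw [edist_self]
  exact lt_of_le_of_lt zero_le h

end BallsMeet

namespace ScaleChain

variable {r : ℝ} {A : Set Z} {x y z : Z}

theorem refl (hx : x ∈ A) : ScaleChain r A x x :=
  ⟨0, fun _ => x, fun _ _ => hx, rfl, rfl, fun i hi => absurd hi (Nat.not_lt_zero i)⟩

theorem left_mem (h : ScaleChain r A x y) : x ∈ A := by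
  obtain ⟨n, c, hc, rfl, -, -⟩ := h
  exact hc 0 (Nat.zero_le n)

theorem snoc (h : ScaleChain r A x y) (hz : z ∈ A) (hyz : BallsMeet r y z) :
    ScaleChain r A x z := by
  obtain ⟨n, c, hc, h0, hn, hstep⟩ := h
  refine ⟨n + 1, fun i => if i ≤ n then c i else z, fun i _ => ?_, by simpa using h0, by simp,
    fun i hi => ?_⟩
  · by_cases hin : i ≤ n
    · simpa [hin] using hc i hin
    · simpa [hin] using hz
  · rcases Nat.lt_succ_iff_lt_or_eq.mp hi with hlt | rfl
    · simpa [hlt.le, Nat.succ_le_of_lt hlt] using hstep i hlt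
    · simpa [hn, BallsMeet] using hyz

theorem induct {P : Z → Prop} (h : ScaleChain r A x y) (hx : P x)
    (hstep : ∀ y z, z ∈ A → BallsMeet r y z → P y → P z) : P y := by
  obtain ⟨n, c, hc, h0, rfl, hmeet⟩ := h
  have key : ∀ i ≤ n, P (c i) := by
    intro i
    induction i with
    | zero => intro _; rwa [h0]
    | succ k ih =>
      intro hk
      exact hstep _ _ (hc _ hk) (hmeet k hk) (ih (Nat.le_of_succ_le hk))
  exact key n le_rfl

theorem edist_le {M : ℝ≥0∞} (h : ScaleChain r A x y) (hM : ScaleBounded r A M) :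
    edist x y ≤ M :=
  (EMetric.edist_le_diam_of_mem (s := ScaleComponent r A x) (refl h.left_mem) h).trans
    (hM x h.left_mem)

end ScaleChain

theorem scaleDimZero_of_edist_le {r : ℝ} {A : Set Z} {C : ℝ≥0∞} (hC : C ≠ ⊤)
    (h : ∀ x y, ScaleChain r A x y → edist x y ≤ C) : ScaleDimZero r A := by
  refine ⟨C + C, ENNReal.add_ne_top.mpr ⟨hC, hC⟩, fun x _ => EMetric.diam_le fun y hy z hz => ?_⟩
  exact (edist_triangle_left y z x).trans (add_le_add (h x y hy) (h x z hz))

/-- In a union `G ∪ H`, a scale-`s`-chain either stays in `G`, or its visits to `H` form a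
scale-`t`-chain in `H`, provided `t` is large compared to the components of `G`. -/
theorem ScaleChain.union_cases {s t : ℝ} {G H : Set Z} {M : ℝ≥0∞} (hst : s ≤ t)
    (hM : ScaleBounded s G M)
    (ht : (ENNReal.ofReal s + ENNReal.ofReal s) + M + (ENNReal.ofReal s + ENNReal.ofReal s)
      < ENNReal.ofReal t)
    {x y : Z} (h : ScaleChain s (G ∪ H) x y) :
    ScaleChain s G x y ∨ ∃ u v, edist x u ≤ M + (ENNReal.ofReal s + ENNReal.ofReal s) ∧
      ScaleChain t H u v ∧ (v = y ∨ ∃ g, BallsMeet s v g ∧ ScaleChain s G g y) := by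
  refine h.induct (P := fun y => ScaleChain s G x y ∨
    ∃ u v, edist x u ≤ M + (ENNReal.ofReal s + ENNReal.ofReal s) ∧
      ScaleChain t H u v ∧ (v = y ∨ ∃ g, BallsMeet s v g ∧ ScaleChain s G g y)) ?_ ?_
  · rcases h.left_mem with hx | hx
    · exact .inl (.refl hx)
    · exact .inr ⟨x, x, by simp, .refl hx, .inl rfl⟩
  · rintro y z hz hyz (hG | ⟨u, v, hxu, huv, rfl | ⟨g, hvg, hgy⟩⟩)
    · rcases hz with hz | hz
      · exact .inl (hG.snoc hz hyz)
      · exact .inr ⟨z, z, (edist_triangle x y z).trans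
          (add_le_add (hG.edist_le hM) hyz.edist_le), .refl hz, .inl rfl⟩
    · rcases hz with hz | hz
      · exact .inr ⟨u, v, hxu, huv, .inr ⟨z, hyz, .refl hz⟩⟩
      · exact .inr ⟨u, z, hxu, huv.snoc hz (hyz.mono hst), .inl rfl⟩
    · rcases hz with hz | hz
      · exact .inr ⟨u, v, hxu, huv, .inr ⟨g, hvg, hgy.snoc hz hyz⟩⟩
      · have hvz : edist v z < ENNReal.ofReal t :=
          ((edist_triangle4 v g y z).trans (add_le_add
            (add_le_add hvg.edist_le (hgy.edist_le hM)) hyz.edist_le)).trans_lt ht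
        exact .inr ⟨u, z, hxu, huv.snoc hz (.of_edist_lt hvz), .inl rfl⟩

theorem ScaleBounded.scaleDimZero_union {s t : ℝ} {G H : Set Z} {M : ℝ≥0∞} (hst : s ≤ t)
    (hM : ScaleBounded s G M)
    (ht : (ENNReal.ofReal s + ENNReal.ofReal s) + M + (ENNReal.ofReal s + ENNReal.ofReal s)
      < ENNReal.ofReal t)
    (hH : ScaleDimZero t H) : ScaleDimZero s (G ∪ H) := by
  obtain ⟨N, hNtop, hN⟩ := hH
  have hMtop : M ≠ ⊤ := by
    rintro rfl
    simp at ht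
  set e := ENNReal.ofReal s + ENNReal.ofReal s with he
  have hetop : e ≠ ⊤ := by simp [he]
  refine scaleDimZero_of_edist_le (C := (M + e) + N + (e + M)) (by simp [hMtop, hNtop, hetop])
    fun x y hxy => ?_
  rcases hxy.union_cases hst hM ht with hG | ⟨u, v, hxu, huv, hvy⟩
  · exact (hG.edist_le hM).trans (le_add_self.trans le_add_self)
  · refine (edist_triangle4 x u v y).trans (add_le_add (add_le_add hxu (huv.edist_le hN)) ?_)
    rcases hvy with rfl | ⟨g, hvg, hgy⟩
    · simp
    · exact (edist_triangle v g y).trans (add_le_add hvg.edist_le (hgy.edist_le hM))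

theorem scaleDimZero_empty (r : ℝ) : ScaleDimZero r (∅ : Set Z) :=
  ⟨0, ENNReal.zero_ne_top, fun _ hx => hx.elim⟩

theorem UnionAtMost.mono {m n : ℕ} {s : ℝ} {A : Set Z} (hmn : m ≤ n) (h : UnionAtMost m s A) :
    UnionAtMost n s A := by
  obtain ⟨G, rfl, hG⟩ := h
  refine ⟨fun j => if hj : j.val < m then G ⟨j, hj⟩ else ∅, ?_, fun j => ?_⟩
  · ext x
    simp only [mem_iUnion]
    constructor
    · rintro ⟨j, hj⟩
      exact ⟨⟨j, j.isLt.trans_le hmn⟩, by simpa using hj⟩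
    · rintro ⟨j, hj⟩
      split_ifs at hj with hjm
      · exact ⟨_, hj⟩
      · exact hj.elim
  · dsimp only
    split_ifs with hjm
    · exact hG _
    · exact scaleDimZero_empty s

theorem unionAtMost_two {r : ℝ} {A B : Set Z} (hA : ScaleDimZero r A) (hB : ScaleDimZero r B) :
    UnionAtMost 2 r (A ∪ B) := by
  refine ⟨![A, B], ?_, ?_⟩
  · ext x
    simp [Fin.exists_fin_two]
  · simpa [Fin.forall_fin_two] using ⟨hA, hB⟩

/-- A set that is a union of `n` sets of scale-`s`-dimension `0` can be enlarged by any union of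
`n` sets of scale-`t`-dimension `0`, once `t` is large enough. -/
theorem UnionAtMost.exists_scale_union {n : ℕ} {s : ℝ} {A : Set Z} (h : UnionAtMost n s A) :
    ∃ t, s ≤ t ∧ ∀ B : Set Z, UnionAtMost n t B → UnionAtMost n s (A ∪ B) := by
  obtain ⟨G, rfl, hG⟩ := h
  choose M hMtop hM using hG
  set e := ENNReal.ofReal s + ENNReal.ofReal s with he
  have hfin : e + (∑ j, M j) + e ≠ ⊤ := by
    simp [he, ENNReal.sum_eq_top, hMtop]
  refine ⟨max s ((e + (∑ j, M j) + e).toReal + 1), le_max_left _ _, ?_⟩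
  rintro _ ⟨H, rfl, hH⟩
  refine ⟨fun j => G j ∪ H j, iUnion_union_distrib G H |>.symm, fun j => ?_⟩
  refine ScaleBounded.scaleDimZero_union (M := ∑ j, M j) (le_max_left _ _)
    (fun x hx => (hM j x hx).trans (Finset.single_le_sum_of_canonicallyOrdered
      (Finset.mem_univ j))) ?_ (hH j)
  rw [← he, ENNReal.lt_ofReal_iff_toReal_lt hfin]
  exact lt_max_of_lt_right (lt_add_one _)

end

/-- Let `X` and `Y` be subspaces of an `∞`-pseudo-metric space `Z`. If `(1, α)` is an APD
profile of `X` and `(1, β)` is an APD profile of `Y`, then `(2, max(α, β))` is an APD profile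
of `X ∪ Y`: for all reals `0 < r ≤ s` there is a decomposition `X ∪ Y = W₀ ∪ W₁` such that
`W₀` is the union of at most `2` subsets of scale-`r`-dimension `0` and `W₁` is the union of
at most `⌊max (α r) (β r)⌋` subsets of scale-`s`-dimension `0`. -/
theorem apdPair_union {Z : Type*} [PseudoEMetricSpace Z] (X Y : Set Z) (α β : ℝ → ℝ)
    (hαmono : MonotoneOn α (Set.Ioi (0 : ℝ))) (hαnonneg : ∀ t : ℝ, 0 < t → 0 ≤ α t)
    (hβmono : MonotoneOn β (Set.Ioi (0 : ℝ))) (hβnonneg : ∀ t : ℝ, 0 < t → 0 ≤ β t)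
    (hX : APDPairOn X α) (hY : APDPairOn Y β) :
    ∀ r s : ℝ, 0 < r → r ≤ s →
      ∃ W₀ W₁ : Set Z, W₀ ∪ W₁ = X ∪ Y ∧ UnionAtMost 2 r W₀ ∧
        UnionAtMost (Nat.floor (max (α r) (β r))) s W₁ := by
  intro r s hr hrs
  obtain ⟨X₀, X₁, rfl, hX₀, hX₁⟩ := hX r s hr hrs
  obtain ⟨t, hst, ht⟩ :=
    (hX₁.mono (Nat.floor_le_floor (le_max_left (α r) (β r)))).exists_scale_union
  obtain ⟨Y₀, Y₁, rfl, hY₀, hY₁⟩ := hY r t hr (hrs.trans hst)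
  exact ⟨X₀ ∪ Y₀, X₁ ∪ Y₁, union_union_union_comm X₀ Y₀ X₁ Y₁, unionAtMost_two hX₀ hY₀,
    ht Y₁ (hY₁.mono (Nat.floor_le_floor (le_max_right (α r) (β r))))⟩
end

section
/- Let G be a countable group equipped with a left-invariant metric d (d(g·x, g·y) = d(x,y) for all g, x, y ∈ G) that is proper (every ball of finite radius contains only finitely many elements). If (α_0,…,α_k) is an APD profile of every finitely generated subgroup of G (with the metric induced from G), then (α_0,…,α_k) is an APD profile of G. -/
open Set
open scoped ENNReal

/-- `(α 0, …, α k)` is an APD profile of `X`: each `α i` is a non-decreasing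
nonnegative function of positive reals, `α 0` is constant, and for every non-decreasing array
`(r 0, …, r k)` of positive reals there is a decomposition `X = F 0 ∪ … ∪ F k` where each
`F i` is the union of at most `⌊α i (r (i-1))⌋` subsets of scale-`r i`-dimension `0`
(`α 0` being applied to its constant value for `i = 0`). -/
def IsAPDProfile (X : Type*) [PseudoEMetricSpace X] (k : ℕ) (α : ℕ → ℝ → ℝ) : Prop :=
  (∀ x y : ℝ, α 0 x = α 0 y) ∧
  (∀ i ≤ k, MonotoneOn (α i) (Set.Ioi (0 : ℝ))) ∧
  (∀ i ≤ k, ∀ x : ℝ, 0 < x → 0 ≤ α i x) ∧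
  (∀ r : ℕ → ℝ, (∀ i ≤ k, 0 < r i) → (∀ i < k, r i ≤ r (i + 1)) →
    ∃ F : ℕ → Set X, (⋃ i ∈ Finset.range (k + 1), F i) = univ ∧
      ∀ i ≤ k, UnionAtMost (Nat.floor (α i (if i = 0 then 0 else r (i - 1)))) (r i) (F i))

/-- A map `f` sending points with intersecting `r`-balls to points with intersecting `r`-balls, and
which is isometric on the fibres of a map `p` constant along such pairs, pulls back sets of
scale-`r`-dimension `0` to sets of scale-`r`-dimension `0`. -/
theorem ScaleDimZero.preimage {X Y Q : Type*} [PseudoEMetricSpace X] [PseudoEMetricSpace Y]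
    {r : ℝ} (f : X → Y) (p : X → Q)
    (hp : ∀ x y, (Metric.eball x (ENNReal.ofReal r) ∩
      Metric.eball y (ENNReal.ofReal r)).Nonempty → p x = p y)
    (hf : ∀ x y, (Metric.eball x (ENNReal.ofReal r) ∩
      Metric.eball y (ENNReal.ofReal r)).Nonempty →
      (Metric.eball (f x) (ENNReal.ofReal r) ∩ Metric.eball (f y) (ENNReal.ofReal r)).Nonempty)
    (hiso : ∀ x y, p x = p y → edist (f x) (f y) = edist x y)
    {A : Set Y} (hA : ScaleDimZero r A) : ScaleDimZero r (f ⁻¹' A) := by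
  obtain ⟨M, hM, hdiam⟩ := hA
  have hchain : ∀ x y, ScaleChain r (f ⁻¹' A) x y → p x = p y ∧ ScaleChain r A (f x) (f y) := by
    rintro x y ⟨n, c, hc, rfl, rfl, hstep⟩
    refine ⟨?_, n, f ∘ c, hc, rfl, rfl, fun i hi => hf _ _ (hstep i hi)⟩
    have hconst : ∀ i ≤ n, p (c 0) = p (c i) := by
      intro i
      induction i with
      | zero => exact fun _ => rfl
      | succ i ih => exact fun hi => (ih (by omega)).trans (hp _ _ (hstep i hi))
    exact hconst n le_rfl
  refine ⟨M, hM, fun x hx => Metric.ediam_le fun y hy z hz => ?_⟩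
  obtain ⟨hpy, hy⟩ := hchain x y hy
  obtain ⟨hpz, hz⟩ := hchain x z hz
  rw [← hiso y z (hpy.symm.trans hpz)]
  exact (Metric.edist_le_ediam_of_mem (s := ScaleComponent r A (f x)) hy hz).trans (hdiam (f x) hx)

/-- Preimages of finite unions of sets of scale-`r`-dimension `0`, provided preimages of the pieces
have scale-`r`-dimension `0`. -/
theorem UnionAtMost.preimage {X Y : Type*} [PseudoEMetricSpace X] [PseudoEMetricSpace Y]
    {n : ℕ} {r : ℝ} (f : X → Y) (hf : ∀ A : Set Y, ScaleDimZero r A → ScaleDimZero r (f ⁻¹' A))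
    {A : Set Y} (hA : UnionAtMost n r A) : UnionAtMost n r (f ⁻¹' A) := by
  obtain ⟨B, rfl, hB⟩ := hA
  exact ⟨fun j => f ⁻¹' B j, preimage_iUnion, fun j => hf _ (hB j)⟩

/-- Translation of each left coset of `H` onto `H` by a chosen representative. -/
noncomputable def toSubgroupOfOut {G : Type*} [Group G] (H : Subgroup G) (x : G) : H :=
  ⟨(x : G ⧸ H).out⁻¹ * x, QuotientGroup.eq.1 (QuotientGroup.out_eq' (x : G ⧸ H))⟩

theorem edist_toSubgroupOfOut {G : Type*} [Group G] [PseudoMetricSpace G]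
    (hinv : ∀ g x y : G, dist (g * x) (g * y) = dist x y) {H : Subgroup G} {x y : G}
    (hxy : (x : G ⧸ H) = y) :
    edist (toSubgroupOfOut H x) (toSubgroupOfOut H y) = edist x y := by
  rw [Subtype.edist_eq]
  simp only [toSubgroupOfOut, hxy, edist_dist, hinv]

theorem ScaleDimZero.preimage_toSubgroupOfOut {G : Type*} [Group G] [PseudoMetricSpace G]
    (hinv : ∀ g x y : G, dist (g * x) (g * y) = dist x y) {H : Subgroup G} {r : ℝ}
    (hH : Metric.ball (1 : G) r ⊆ H) {A : Set H} (hA : ScaleDimZero r A) :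
    ScaleDimZero r (toSubgroupOfOut H ⁻¹' A) := by
  have hcoset : ∀ x z : G, z ∈ Metric.eball x (ENNReal.ofReal r) → (z : G ⧸ H) = x := by
    intro x z hz
    refine (QuotientGroup.eq.2 (hH ?_)).symm
    rw [Metric.eball_ofReal] at hz
    have hdist := hinv x⁻¹ z x
    rw [inv_mul_cancel] at hdist
    rwa [Metric.mem_ball, hdist]
  have hmem : ∀ x z : G, z ∈ Metric.eball x (ENNReal.ofReal r) →
      toSubgroupOfOut H z ∈ Metric.eball (toSubgroupOfOut H x) (ENNReal.ofReal r) := by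
    intro x z hz
    rw [Metric.mem_eball, edist_toSubgroupOfOut hinv (hcoset x z hz)]
    exact hz
  refine hA.preimage _ (fun x : G => (x : G ⧸ H)) ?_ ?_
    (fun x y hxy => edist_toSubgroupOfOut hinv hxy)
  · rintro x y ⟨z, hzx, hzy⟩
    exact (hcoset x z hzx).symm.trans (hcoset y z hzy)
  · rintro x y ⟨z, hzx, hzy⟩
    exact ⟨_, hmem x z hzx, hmem y z hzy⟩

/-- Let `G` be a countable group equipped with a left-invariant metric (`dist (g*x) (g*y) =
dist x y`) that is proper (every ball of finite radius is a finite set). If `(α 0, …, α k)`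
is an APD profile of every finitely generated subgroup of `G` (with the metric induced from
`G`), then `(α 0, …, α k)` is an APD profile of `G`. -/
theorem apdProfile_of_fg_subgroups {G : Type*} [Group G] [Countable G] [MetricSpace G]
    (hinv : ∀ g x y : G, dist (g * x) (g * y) = dist x y)
    (hproper : ∀ x : G, ∀ R : ℝ, (Metric.ball x R).Finite)
    (k : ℕ) (α : ℕ → ℝ → ℝ)
    (hfg : ∀ H : Subgroup G, H.FG → IsAPDProfile H k α) :
    IsAPDProfile G k α := by
  obtain ⟨hconst, hmono, hnonneg, -⟩ := hfg ⊥ Subgroup.FG.bot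
  refine ⟨hconst, hmono, hnonneg, fun r hpos hle => ?_⟩
  set R : ℝ := ∑ i ∈ Finset.range (k + 1), r i
  have hrR : ∀ i ≤ k, r i ≤ R := fun i hi =>
    Finset.single_le_sum (f := r)
      (fun j hj => (hpos j (Nat.lt_succ_iff.1 (Finset.mem_range.1 hj))).le)
      (Finset.mem_range.2 (Nat.lt_succ_of_le hi))
  set H : Subgroup G := Subgroup.closure (Metric.ball 1 R)
  have hH : H.FG := (Subgroup.fg_iff H).2 ⟨_, rfl, hproper 1 R⟩
  obtain ⟨F, hF, hdim⟩ := (hfg H hH).2.2.2 r hpos hle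
  refine ⟨fun i => toSubgroupOfOut H ⁻¹' F i, ?_, fun i hi => ?_⟩
  · rw [← preimage_iUnion₂, hF, preimage_univ]
  · exact (hdim i hi).preimage _ fun A hA => hA.preimage_toSubgroupOfOut hinv
      ((Metric.ball_subset_ball (hrR i hi)).trans Subgroup.subset_closure)
end
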